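/- The rate function I is well defined and lower semicontinuous: for every μ ∈ 𝒫 the function f(z,w) = log|1−z| + log|1−w| − log|z−w| has a well-defined integral in (−∞,∞] with respect to μ⊗μ, uniformly bounded below over 𝒫, and the function I : M_1(ℂ) → (−∞,∞] is lower semicontinuous with respect to weak convergence. -/

import Mathlib

open MeasureTheory ProbabilityTheory Filter Polynomial
open scoped ENNReal NNReal Classical

noncomputable section

/-- Polynomials of positive degree with all coefficients real and strictly positive. -/
def polPos (p : Polynomial ℂ) : Prop :=
  0 < p.natDegree ∧ ∀ i ≤ p.natDegree, (p.coeff i).im = 0 ∧ 0 < (p.coeff i).re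

/-- Empirical measure of the zeros of a polynomial (counted with multiplicity). -/
def zeroMeasure (p : Polynomial ℂ) : Measure ℂ :=
  (p.natDegree : ℝ≥0∞)⁻¹ • (p.roots.map MeasureTheory.Measure.dirac).sum

/-- The closure of the set of empirical zero measures of polynomials with positive
coefficients, inside the space of probability measures with the weak topology. -/
def calP : Set (ProbabilityMeasure ℂ) :=
  closure {μ : ProbabilityMeasure ℂ |
    ∃ p : Polynomial ℂ, polPos p ∧ (μ : Measure ℂ) = zeroMeasure p}

/-- The kernel f(z,w) = log|1-z| + log|1-w| - log|z-w|. -/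
def fker (z w : ℂ) : ℝ :=
  Real.log ‖1 - z‖ + Real.log ‖1 - w‖
    - Real.log ‖z - w‖

/-- The double integral ∬ f dμ dμ, as an extended real number: the (Lebesgue)
integral of the positive part minus that of the negative part. -/
def doubleInt (μ : Measure ℂ) : EReal :=
  ((∫⁻ q : ℂ × ℂ, ENNReal.ofReal (fker q.1 q.2) ∂(μ.prod μ) : ℝ≥0∞) : EReal)
    - ((∫⁻ q : ℂ × ℂ, ENNReal.ofReal (-(fker q.1 q.2)) ∂(μ.prod μ) : ℝ≥0∞) : EReal)

/-- The large deviations rate function. -/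
def rateI (μ : ProbabilityMeasure ℂ) : EReal :=
  if μ ∈ calP then (2 : EReal)⁻¹ * doubleInt (μ : Measure ℂ) else ⊤

end


theorem lsc_lintegral_aux {Ω : Type*} [MeasurableSpace Ω] [TopologicalSpace Ω]
    [TopologicalSpace.MetrizableSpace Ω] [TopologicalSpace.SeparableSpace Ω] [BorelSpace Ω]
    (f : Ω → ℝ) (hf0 : 0 ≤ f) (hfm : Measurable f) (hf : ∀ t > 0, IsOpen {a | t < f a}) :
    LowerSemicontinuous (fun ν : ProbabilityMeasure Ω => ∫⁻ x, ENNReal.ofReal (f x) ∂(ν : Measure Ω)) := by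
  intro μ y hy
  by_contra hcon
  rw [Filter.not_eventually] at hcon
  obtain ⟨u, hu, hu2⟩ := Filter.exists_seq_forall_of_frequently hcon
  have key : ∫⁻ x, ENNReal.ofReal (f x) ∂(μ : Measure Ω) ≤
      atTop.liminf (fun i ↦ ∫⁻ x, ENNReal.ofReal (f x) ∂(u i : Measure Ω)) := by
    simp_rw [lintegral_eq_lintegral_meas_lt _ (Eventually.of_forall hf0) hfm.aemeasurable]
    calc ∫⁻ (t : ℝ) in Set.Ioi 0, (μ : Measure Ω) {a | t < f a}
        ≤ ∫⁻ (t : ℝ) in Set.Ioi 0, atTop.liminf (fun i ↦ (u i : Measure Ω) {a | t < f a}) := by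
          refine setLIntegral_mono' measurableSet_Ioi fun t ht => ?_
          exact ProbabilityMeasure.le_liminf_measure_open_of_tendsto hu (hf t ht)
      _ ≤ _ := lintegral_liminf_le (fun n ↦ Antitone.measurable (fun s t hst ↦
            measure_mono (fun ω hω ↦ lt_of_le_of_lt hst hω)))
  have : atTop.liminf (fun i ↦ ∫⁻ x, ENNReal.ofReal (f x) ∂(u i : Measure Ω)) ≤ y := by
    refine liminf_le_of_le (by isBoundedDefault) ?_
    intro b hb
    obtain ⟨i, hi⟩ := hb.exists
    exact hi.trans (not_lt.1 (hu2 i))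
  exact absurd hy (not_lt.2 (key.trans this))

noncomputable def kker (r N : ℝ) (z : ℂ) : ℝ :=
  if z = 1 then N else max 0 (Real.log r - Real.log ‖1 - z‖)

theorem kker_nonneg (r : ℝ) {N : ℝ} (hN : 0 ≤ N) : 0 ≤ kker r N := by
  intro z
  unfold kker
  split_ifs
  · exact hN
  · exact le_max_left _ _

theorem kker_meas (r N : ℝ) : Measurable (kker r N) := by
  unfold kker
  refine Measurable.ite (measurableSet_singleton 1) measurable_const ?_
  fun_prop

theorem kker_open (r : ℝ) (hr : 0 < r) (N : ℝ) (t : ℝ) (ht : 0 < t) :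
    IsOpen {a | t < kker r N a} := by
  have : {a | t < kker r N a} = {z : ℂ | ‖1 - z‖ < r * Real.exp (-t)} ∩ {z | z ≠ 1 ∨ t < N} := by
    ext z
    simp only [Set.mem_ofPred_eq, kker, Set.mem_inter_iff]
    by_cases hz : z = 1
    · simp [hz]; intro _; positivity
    · have h1 : 0 < ‖1 - z‖ := norm_pos_iff.2 (sub_ne_zero.2 (Ne.symm hz))
      simp only [hz, if_false, ne_eq, not_false_eq_true, true_or, and_true, lt_max_iff]
      rw [← Real.log_lt_log_iff h1 (by positivity), Real.log_mul hr.ne' (Real.exp_pos _).ne',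
        Real.log_exp]
      constructor
      · rintro (h | h) <;> linarith
      · intro h; right; linarith
  rw [this]
  refine IsOpen.inter (isOpen_lt (by fun_prop) (by fun_prop)) ?_
  by_cases h : t < N
  · simp [h]
  · simp only [h, or_false]
    exact isOpen_ne

theorem poly_eval_bound (p : Polynomial ℂ) (hp : polPos p) (r : ℝ) (hr : 0 < r) (x : ℂ)
    (hx : ‖x‖ ≤ 1) : 0 < ‖p.eval 1‖ ∧
      ‖p.eval (r * x + 1)‖ ≤ ‖p.eval 1‖ * (1 + r) ^ p.natDegree := by
  have hn : ∀ i ∈ Finset.range (p.natDegree + 1), ‖p.coeff i‖ = (p.coeff i).re := by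
    intro i hi
    have := hp.2 i (by simpa [Nat.lt_succ_iff] using hi)
    have h2 : p.coeff i = ((p.coeff i).re : ℂ) := by
      apply Complex.ext <;> simp [this.1]
    rw [h2, Complex.norm_real, Complex.ofReal_re, Real.norm_of_nonneg this.2.le]
  have h1 : p.eval 1 = ((∑ i ∈ Finset.range (p.natDegree + 1), ‖p.coeff i‖ : ℝ) : ℂ) := by
    rw [eval_eq_sum_range, Complex.ofReal_sum]
    refine Finset.sum_congr rfl fun i hi => ?_
    rw [hn i hi]
    have := hp.2 i (by simpa [Nat.lt_succ_iff] using hi)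
    apply Complex.ext <;> simp [this.1]
  have h0 : 0 < ∑ i ∈ Finset.range (p.natDegree + 1), ‖p.coeff i‖ := by
    refine Finset.sum_pos (fun i hi => ?_) ⟨0, by simp⟩
    rw [hn i hi]
    exact (hp.2 i (by simpa [Nat.lt_succ_iff] using hi)).2
  rw [h1, Complex.norm_real, Real.norm_of_nonneg h0.le]
  refine ⟨h0, ?_⟩
  rw [eval_eq_sum_range, Finset.sum_mul]
  refine (norm_sum_le _ _).trans (Finset.sum_le_sum fun i hi => ?_)
  rw [norm_mul, norm_pow]
  gcongr ?_ * ?_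
  have hb : ‖(r : ℂ) * x + 1‖ ≤ 1 + r := by
    refine (norm_add_le _ _).trans ?_
    rw [norm_mul, Complex.norm_real, Real.norm_of_nonneg hr.le, norm_one]
    nlinarith
  refine (pow_le_pow_left₀ (norm_nonneg _) hb i).trans ?_
  exact pow_le_pow_right₀ (by linarith) (by simpa [Nat.lt_succ_iff] using hi)

theorem poly_sum_bound (p : Polynomial ℂ) (hp : polPos p) (r : ℝ) (hr : 0 < r) (N : ℝ) :
    (p.roots.map (kker r N)).sum ≤ p.natDegree * Real.log (1 + r) := by
  have hp0 : p ≠ 0 := by rintro rfl; simpa [polPos] using hp.1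
  have he := (poly_eval_bound p hp r hr 0 (by simp)).1
  have hroot : ∀ a ∈ p.roots, a ≠ 1 := by
    rintro a ha rfl
    rw [mem_roots hp0, IsRoot.def] at ha
    simp [ha] at he
  have hspl : p = C p.leadingCoeff * (p.roots.map fun a => X - C a).prod :=
    (IsAlgClosed.splits p).eq_prod_roots
  have hev : ∀ x, p.eval x = p.leadingCoeff * (p.roots.map fun a => x - a).prod := by
    intro x
    conv_lhs => rw [hspl]
    simp [eval_multiset_prod, Multiset.map_map]
  have h1 := hev 1
  have hlc : p.leadingCoeff ≠ 0 := leadingCoeff_ne_zero.2 hp0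
  have hpe : p.eval 1 ≠ 0 := norm_pos_iff.1 he
  set Q : Polynomial ℂ := (p.roots.map fun a => C ((r : ℂ) / (1 - a)) * X + C 1).prod with hQ
  have hQe : ∀ x, Q.eval x = p.eval (r * x + 1) / p.eval 1 := by
    intro x
    rw [hev, hev 1, mul_div_mul_left _ _ hlc, hQ, eval_multiset_prod, Multiset.map_map,
      ← Multiset.prod_map_div]
    congr 1
    refine Multiset.map_congr rfl fun a ha => ?_
    have : (1 - a) ≠ 0 := sub_ne_zero.2 (hroot a ha).symm
    simp
    field_simp
    ring
  have hQM : Q.mahlerMeasure = Real.exp (p.roots.map (kker r N)).sum := by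
    rw [hQ, prod_mahlerMeasure_eq_mahlerMeasure_prod, Multiset.map_map, Real.exp_multiset_sum,
      Multiset.map_map]
    congr 1
    refine Multiset.map_congr rfl fun a ha => ?_
    have h3 : (1 - a) ≠ 0 := sub_ne_zero.2 (hroot a ha).symm
    have h4 : 0 < ‖1 - a‖ := norm_pos_iff.2 h3
    simp only [Function.comp]
    rw [mahlerMeasure_C_mul_X_add_C (div_ne_zero (by exact_mod_cast hr.ne') h3)]
    simp only [kker, hroot a ha, if_false]
    rw [← Real.log_div hr.ne' h4.ne', Real.exp_monotone.map_max, Real.exp_log (by positivity),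
      Real.exp_zero, max_comm]
    simp [abs_of_pos hr]
  have hlog : Q.logMahlerMeasure ≤ p.natDegree * Real.log (1 + r) := by
    rw [logMahlerMeasure_def]
    refine Real.circleAverage_mono_on_of_le_circle ?_ ?_
    · exact (analyticOnNhd_id.aeval_polynomial Q).meromorphicOn.circleIntegrable_log_norm
    · intro x hx
      have hx1 : ‖x‖ ≤ 1 := by simp at hx; exact hx.le
      have hb := (poly_eval_bound p hp r hr x hx1).2
      rw [← Real.log_pow]
      by_cases hz : ‖Q.eval x‖ = 0
      · rw [hz, Real.log_zero]
        exact Real.log_nonneg (one_le_pow₀ (by linarith))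
      · refine Real.log_le_log (lt_of_le_of_ne (norm_nonneg _) (Ne.symm hz)) ?_
        rw [hQe, norm_div, div_le_iff₀ he]
        exact hb.trans_eq (mul_comm _ _)
  rwa [logMahlerMeasure_eq_log_MahlerMeasure, hQM, Real.log_exp] at hlog

theorem zero_bound (p : Polynomial ℂ) (hp : polPos p) (r : ℝ) (hr : 0 < r) (N : ℝ) (hN : 0 ≤ N) :
    ∫⁻ z, ENNReal.ofReal (kker r N z) ∂(zeroMeasure p) ≤ ENNReal.ofReal (Real.log (1 + r)) := by
  have hs : ∀ s : Multiset ℂ, ∫⁻ z, ENNReal.ofReal (kker r N z) ∂((s.map Measure.dirac).sum)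
      = ENNReal.ofReal (s.map (kker r N)).sum := by
    intro s
    induction s using Multiset.induction_on with
    | empty => simp
    | cons a s ih =>
      rw [Multiset.map_cons, Multiset.sum_cons, lintegral_add_measure, ih, Multiset.map_cons,
        Multiset.sum_cons, ENNReal.ofReal_add (kker_nonneg r hN a), lintegral_dirac]
      refine Multiset.sum_nonneg fun x hx => ?_
      obtain ⟨b, -, rfl⟩ := Multiset.mem_map.1 hx
      exact kker_nonneg r hN b
  rw [zeroMeasure, lintegral_smul_measure, hs]
  have hb := ENNReal.ofReal_le_ofReal (poly_sum_bound p hp r hr N)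
  rw [ENNReal.ofReal_mul (by positivity), ENNReal.ofReal_natCast] at hb
  have hn : (p.natDegree : ℝ≥0∞) ≠ 0 := by exact_mod_cast hp.1.ne'
  calc _ ≤ (p.natDegree : ℝ≥0∞)⁻¹ * (p.natDegree * ENNReal.ofReal (Real.log (1 + r))) := by
        rw [smul_eq_mul]; gcongr
    _ = _ := by
        rw [← mul_assoc, ENNReal.inv_mul_cancel hn (ENNReal.natCast_ne_top _), one_mul]

theorem calP_bound (μ : ProbabilityMeasure ℂ) (hμ : μ ∈ calP) (r : ℝ) (hr : 0 < r) (N : ℝ)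
    (hN : 0 ≤ N) :
    ∫⁻ z, ENNReal.ofReal (kker r N z) ∂(μ : Measure ℂ) ≤ ENNReal.ofReal (Real.log (1 + r)) := by
  have hl := lsc_lintegral_aux (kker r N) (kker_nonneg r hN) (kker_meas r N) (kker_open r hr N)
  have hc := hl.isClosed_preimage (ENNReal.ofReal (Real.log (1 + r)))
  refine closure_minimal ?_ hc hμ
  rintro ν ⟨p, hp, h⟩
  simp only [Set.mem_preimage, Set.mem_Iic]
  rw [h]
  exact zero_bound p hp r hr N hN

theorem calP_one (μ : ProbabilityMeasure ℂ) (hμ : μ ∈ calP) : (μ : Measure ℂ) {1} = 0 := by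
  by_contra h
  have hN : ∀ N : ℕ, N * (μ : Measure ℂ) {1} ≤ ENNReal.ofReal (Real.log (1 + 1)) := by
    intro N
    refine le_trans ?_ (calP_bound μ hμ 1 one_pos N (by positivity))
    rw [← setLIntegral_const]
    refine le_trans ?_ (setLIntegral_le_lintegral {1} _)
    refine setLIntegral_mono' (measurableSet_singleton _) fun z hz => ?_
    simp at hz
    simp [kker, hz]
  obtain ⟨n, hn⟩ := ENNReal.exists_nat_mul_gt h (ENNReal.ofReal_ne_top (r := Real.log (1 + 1)))
  exact absurd (hN n) (not_le.2 hn)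

noncomputable def Gker (r : ℝ) (q : ℂ × ℂ) : ℝ :=
  Real.log (max ‖1 - q.1‖ r) + Real.log (max ‖1 - q.2‖ r) - Real.log ‖q.1 - q.2‖

noncomputable def Ccon (r : ℝ) : ℝ := Real.log 2 - 2 * Real.log r

theorem Ccon_nonneg {r : ℝ} (hr : 0 < r) (hr1 : r ≤ 1) : 0 ≤ Ccon r := by
  have h1 := Real.log_nonpos hr.le hr1
  have h2 : 0 ≤ Real.log 2 := Real.log_nonneg (by norm_num)
  unfold Ccon; linarith

theorem Gker_bdd {r : ℝ} (hr : 0 < r) (hr1 : r ≤ 1) (q : ℂ × ℂ) : 0 ≤ Gker r q + Ccon r := by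
  have h1 := Real.log_nonpos hr.le hr1
  have h2 : 0 ≤ Real.log 2 := Real.log_nonneg (by norm_num)
  unfold Gker Ccon
  set a := max ‖1 - q.1‖ r with ha
  set b := max ‖1 - q.2‖ r with hb
  have har : r ≤ a := le_max_right _ _
  have hbr : r ≤ b := le_max_right _ _
  have hla := Real.log_le_log hr har
  have hlb := Real.log_le_log hr hbr
  by_cases hq : q.1 - q.2 = 0
  · rw [hq, norm_zero, Real.log_zero]; linarith
  · have hpos : 0 < ‖q.1 - q.2‖ := norm_pos_iff.2 hq
    have htri : ‖q.1 - q.2‖ ≤ a + b := by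
      have : q.1 - q.2 = (1 - q.2) - (1 - q.1) := by ring
      rw [this]
      refine (norm_sub_le _ _).trans ?_
      linarith [le_max_left ‖1 - q.1‖ r, le_max_left ‖1 - q.2‖ r]
    rcases le_total a b with h | h
    · have := Real.log_le_log hpos (htri.trans (show a + b ≤ 2 * b by linarith))
      rw [Real.log_mul (by norm_num) (by linarith)] at this
      linarith
    · have := Real.log_le_log hpos (htri.trans (show a + b ≤ 2 * a by linarith))
      rw [Real.log_mul (by norm_num) (by linarith)] at this
      linarith

theorem Gker_meas (r : ℝ) : Measurable (Gker r) := by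
  unfold Gker; fun_prop

theorem neglog_lsc : LowerSemicontinuous (fun u : ℂ => - Real.log ‖u‖) := by
  rw [lowerSemicontinuous_iff_isOpen_preimage]
  intro t
  have : (fun u : ℂ => - Real.log ‖u‖) ⁻¹' Set.Ioi t =
      {u : ℂ | ‖u‖ < Real.exp (-t)} ∩ {u | u ≠ 0 ∨ t < 0} := by
    ext u
    simp only [Set.mem_preimage, Set.mem_Ioi, Set.mem_inter_iff, Set.mem_ofPred_eq]
    by_cases hu : u = 0
    · simp [hu]; intro _; positivity
    · have h1 : 0 < ‖u‖ := norm_pos_iff.2 hu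
      rw [← Real.log_lt_log_iff h1 (by positivity), Real.log_exp]
      simp only [hu, ne_eq, not_false_eq_true, true_or, and_true]
      constructor <;> intro h <;> linarith
  rw [this]
  refine IsOpen.inter (isOpen_lt (by fun_prop) (by fun_prop)) ?_
  by_cases h : t < 0
  · simp [h]
  · simp only [h, or_false]
    exact isOpen_ne

theorem Gker_lsc {r : ℝ} (hr : 0 < r) (c : ℝ) : LowerSemicontinuous (fun q => Gker r q + c) := by
  have h1 : LowerSemicontinuous (fun q : ℂ × ℂ => - Real.log ‖q.1 - q.2‖) :=
    neglog_lsc.comp (f := fun u : ℂ => - Real.log ‖u‖) (g := fun q : ℂ × ℂ => q.1 - q.2) (by fun_prop)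
  have h2 : Continuous (fun q : ℂ × ℂ =>
      Real.log (max ‖1 - q.1‖ r) + Real.log (max ‖1 - q.2‖ r) + c) := by
    refine (Continuous.add ?_ ?_).add continuous_const
    · exact Continuous.log (by fun_prop) fun q => (lt_max_of_lt_right hr).ne'
    · exact Continuous.log (by fun_prop) fun q => (lt_max_of_lt_right hr).ne'
  have h3 := h2.lowerSemicontinuous.add h1
  have h4 : (fun q => Gker r q + c) = fun q : ℂ × ℂ =>
      (Real.log (max ‖1 - q.1‖ r) + Real.log (max ‖1 - q.2‖ r) + c) + - Real.log ‖q.1 - q.2‖ := by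
    funext q
    unfold Gker; ring
  rw [h4]
  exact h3

noncomputable def Gint (r : ℝ) (μ : ProbabilityMeasure ℂ) : ℝ≥0∞ :=
  ∫⁻ q, ENNReal.ofReal (Gker r q + Ccon r) ∂((μ : Measure ℂ).prod (μ : Measure ℂ))

theorem Gint_lsc {r : ℝ} (hr : 0 < r) (hr1 : r ≤ 1) : LowerSemicontinuous (Gint r) := by
  have h := lsc_lintegral_aux (fun q => Gker r q + Ccon r) (Gker_bdd hr hr1)
    ((Gker_meas r).add_const _) (fun t _ => (Gker_lsc hr (Ccon r)).isOpen_preimage t)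
  have hc : Continuous (fun μ : ProbabilityMeasure ℂ => μ.prod μ) :=
    ProbabilityMeasure.continuous_prod.comp (continuous_id.prodMk continuous_id)
  exact LowerSemicontinuous.comp h hc

theorem fker_eq {r : ℝ} (hr : 0 < r) {q : ℂ × ℂ} (h1 : q.1 ≠ 1) (h2 : q.2 ≠ 1) :
    fker q.1 q.2 + kker r 0 q.1 + kker r 0 q.2 = Gker r q := by
  have key : ∀ z : ℂ, z ≠ 1 → Real.log (max ‖1 - z‖ r) = Real.log ‖1 - z‖ + kker r 0 z := by
    intro z hz
    have hp : 0 < ‖1 - z‖ := norm_pos_iff.2 (sub_ne_zero.2 hz.symm)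
    simp only [kker, hz, if_false]
    rcases le_total ‖1 - z‖ r with h | h
    · have := Real.log_le_log hp h
      rw [max_eq_right h, max_eq_right (by linarith)]; ring
    · have := Real.log_le_log hr h
      rw [max_eq_left h, max_eq_left (by linarith)]; ring
  unfold fker Gker
  rw [key _ h1, key _ h2]; ring

theorem ae_ne (μ : ProbabilityMeasure ℂ) (hμ : μ ∈ calP) :
    ∀ᵐ q ∂((μ : Measure ℂ).prod (μ : Measure ℂ)), q.1 ≠ 1 ∧ q.2 ≠ 1 := by
  have h : ∀ᵐ z ∂(μ : Measure ℂ), z ≠ 1 := by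
    rw [ae_iff]; simpa using calP_one μ hμ
  exact (Measure.quasiMeasurePreserving_fst.ae h).and (Measure.quasiMeasurePreserving_snd.ae h)

theorem k_int (μ : ProbabilityMeasure ℂ) (hμ : μ ∈ calP) {r : ℝ} (hr : 0 < r) :
    ∫⁻ q, (ENNReal.ofReal (kker r 0 q.1) + ENNReal.ofReal (kker r 0 q.2))
      ∂((μ : Measure ℂ).prod (μ : Measure ℂ)) ≤ ENNReal.ofReal (2 * Real.log (1 + r)) := by
  have hm := (kker_meas r 0).ennreal_ofReal
  rw [lintegral_add_left (show Measurable fun q : ℂ × ℂ => ENNReal.ofReal (kker r 0 q.1) from hm.comp measurable_fst)]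
  have hb := calP_bound μ hμ r hr 0 le_rfl
  have e1 := (measurePreserving_fst (μ := (μ : Measure ℂ)) (ν := (μ : Measure ℂ))).lintegral_comp hm
  have e2 := (measurePreserving_snd (μ := (μ : Measure ℂ)) (ν := (μ : Measure ℂ))).lintegral_comp hm
  have hl : 0 ≤ Real.log (1 + r) := Real.log_nonneg (by linarith)
  rw [e1, e2, two_mul, ENNReal.ofReal_add hl hl]
  exact add_le_add hb hb

theorem fker_meas : Measurable (fun q : ℂ × ℂ => fker q.1 q.2) := by
  unfold fker; fun_prop

theorem fker_neg_meas : Measurable (fun q : ℂ × ℂ => ENNReal.ofReal (-(fker q.1 q.2))) :=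
  fker_meas.neg.ennreal_ofReal

noncomputable def Ap (μ : ProbabilityMeasure ℂ) : ℝ≥0∞ :=
  ∫⁻ q : ℂ × ℂ, ENNReal.ofReal (fker q.1 q.2) ∂((μ : Measure ℂ).prod (μ : Measure ℂ))

noncomputable def Am (μ : ProbabilityMeasure ℂ) : ℝ≥0∞ :=
  ∫⁻ q : ℂ × ℂ, ENNReal.ofReal (-(fker q.1 q.2)) ∂((μ : Measure ℂ).prod (μ : Measure ℂ))

theorem Am_le (μ : ProbabilityMeasure ℂ) (hμ : μ ∈ calP) {r : ℝ} (hr : 0 < r) (hr1 : r ≤ 1) :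
    Am μ ≤ ENNReal.ofReal (Ccon r) + ENNReal.ofReal (2 * Real.log (1 + r)) := by
  refine le_trans ?_ (add_le_add_right (k_int μ hμ hr) _)
  have : ENNReal.ofReal (Ccon r) = ∫⁻ q, ENNReal.ofReal (Ccon r)
      ∂((μ : Measure ℂ).prod (μ : Measure ℂ)) := by simp
  rw [this, ← lintegral_add_left measurable_const]
  refine lintegral_mono_ae ?_
  filter_upwards [ae_ne μ hμ] with q hq
  have k1 := kker_nonneg r le_rfl q.1
  have k2 := kker_nonneg r le_rfl q.2
  rw [← ENNReal.ofReal_add k1 k2, ← ENNReal.ofReal_add (Ccon_nonneg hr hr1) (add_nonneg k1 k2)]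
  refine ENNReal.ofReal_le_ofReal ?_
  have := fker_eq hr hq.1 hq.2
  have := Gker_bdd hr hr1 q
  linarith

theorem ineq1 (μ : ProbabilityMeasure ℂ) (hμ : μ ∈ calP) {r : ℝ} (hr : 0 < r) (hr1 : r ≤ 1) :
    Ap μ + ENNReal.ofReal (Ccon r) ≤ Gint r μ + Am μ := by
  have : ENNReal.ofReal (Ccon r) = ∫⁻ q, ENNReal.ofReal (Ccon r)
      ∂((μ : Measure ℂ).prod (μ : Measure ℂ)) := by simp
  rw [this, Ap, Am, Gint, ← lintegral_add_right _ measurable_const,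
    ← lintegral_add_right _ fker_neg_meas]
  refine lintegral_mono_ae ?_
  filter_upwards [ae_ne μ hμ] with q hq
  have k1 : 0 ≤ kker r 0 q.1 := kker_nonneg r le_rfl q.1
  have k2 : 0 ≤ kker r 0 q.2 := kker_nonneg r le_rfl q.2
  have e := fker_eq hr hq.1 hq.2
  have g := Gker_bdd hr hr1 q
  have c := Ccon_nonneg hr hr1
  rcases le_total 0 (fker q.1 q.2) with h | h
  · rw [← ENNReal.ofReal_add h c]
    refine le_trans (ENNReal.ofReal_le_ofReal ?_) le_self_add
    linarith
  · rw [ENNReal.ofReal_of_nonpos h, zero_add, ← ENNReal.ofReal_add g (by linarith)]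
    refine ENNReal.ofReal_le_ofReal ?_
    linarith

theorem ineq2 (μ : ProbabilityMeasure ℂ) (hμ : μ ∈ calP) {r : ℝ} (hr : 0 < r) (hr1 : r ≤ 1) :
    Gint r μ + Am μ ≤ Ap μ + ENNReal.ofReal (Ccon r) + ENNReal.ofReal (2 * Real.log (1 + r)) := by
  refine le_trans ?_ (add_le_add_right (k_int μ hμ hr) _)
  have : ENNReal.ofReal (Ccon r) = ∫⁻ q, ENNReal.ofReal (Ccon r)
      ∂((μ : Measure ℂ).prod (μ : Measure ℂ)) := by simp
  rw [this, Ap, Am, Gint, ← lintegral_add_right _ measurable_const,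
    ← lintegral_add_right _ fker_neg_meas,
    ← lintegral_add_left (show Measurable fun q : ℂ × ℂ => ENNReal.ofReal (fker q.1 q.2) + ENNReal.ofReal (Ccon r) from
      fker_meas.ennreal_ofReal.add measurable_const)]
  refine lintegral_mono_ae ?_
  filter_upwards [ae_ne μ hμ] with q hq
  have k1 : 0 ≤ kker r 0 q.1 := kker_nonneg r le_rfl q.1
  have k2 : 0 ≤ kker r 0 q.2 := kker_nonneg r le_rfl q.2
  have e := fker_eq hr hq.1 hq.2
  have g := Gker_bdd hr hr1 q
  have c := Ccon_nonneg hr hr1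
  rw [← ENNReal.ofReal_add k1 k2]
  rcases le_total 0 (fker q.1 q.2) with h | h
  · rw [ENNReal.ofReal_of_nonpos (show -(fker q.1 q.2) ≤ 0 by linarith), add_zero,
      ← ENNReal.ofReal_add h c, ← ENNReal.ofReal_add (by linarith) (by linarith)]
    refine ENNReal.ofReal_le_ofReal ?_
    linarith
  · rw [ENNReal.ofReal_of_nonpos h, zero_add, ← ENNReal.ofReal_add g (by linarith),
      ← ENNReal.ofReal_add (by linarith) (by linarith)]
    refine ENNReal.ofReal_le_ofReal ?_
    linarith

theorem doubleInt_eq (μ : ProbabilityMeasure ℂ) :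
    doubleInt (μ : Measure ℂ) = (Ap μ : EReal) - (Am μ : EReal) := rfl

theorem Am_lt (μ : ProbabilityMeasure ℂ) (hμ : μ ∈ calP) : Am μ < ⊤ :=
  (Am_le μ hμ one_pos le_rfl).trans_lt (by finiteness)

theorem coe_nn (x : ℝ≥0) : (((x : ℝ≥0∞) : EReal)) = ((x : ℝ) : EReal) := rfl

theorem doubleInt_lt {μ : ProbabilityMeasure ℂ} (hμ : μ ∈ calP) {r b : ℝ} (hr : 0 < r)
    (hr1 : r ≤ 1) (h : (b : EReal) < doubleInt (μ : Measure ℂ)) :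
    ((b + Ccon r : ℝ) : EReal) < (Gint r μ : EReal) := by
  have h1 := ineq1 μ hμ hr hr1
  have hA := (Am_lt μ hμ).ne
  rw [doubleInt_eq] at h
  by_cases hg : Gint r μ = ⊤
  · rw [hg]; exact EReal.coe_lt_top _
  have hp : Ap μ ≠ ⊤ := by
    intro hp
    rw [hp, top_add, top_le_iff, ENNReal.add_eq_top] at h1
    tauto
  lift Am μ to ℝ≥0 using hA with m
  lift Ap μ to ℝ≥0 using hp with p
  lift Gint r μ to ℝ≥0 using hg with g
  have c := Ccon_nonneg hr hr1
  rw [coe_nn, coe_nn, ← EReal.coe_sub, EReal.coe_lt_coe_iff] at h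
  have h3 : (p : ℝ) + Ccon r ≤ g + m := by
    have := ENNReal.toReal_mono (by finiteness) h1
    rw [ENNReal.toReal_add (by finiteness) (by finiteness),
      ENNReal.toReal_add (by finiteness) (by finiteness), ENNReal.toReal_ofReal c] at this
    simpa using this
  rw [coe_nn, EReal.coe_lt_coe_iff]
  linarith

theorem lt_doubleInt {μ : ProbabilityMeasure ℂ} (hμ : μ ∈ calP) {r b : ℝ} (hr : 0 < r)
    (hr1 : r ≤ 1) (h : ((b + Ccon r : ℝ) : EReal) < (Gint r μ : EReal)) :
    ((b - 2 * Real.log (1 + r) : ℝ) : EReal) ≤ doubleInt (μ : Measure ℂ) := by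
  have h1 := ineq2 μ hμ hr hr1
  have hA := (Am_lt μ hμ).ne
  rw [doubleInt_eq]
  lift Am μ to ℝ≥0 using hA with m
  by_cases hp : Ap μ = ⊤
  · rw [hp, coe_nn, EReal.coe_ennreal_top, EReal.top_sub_coe]; exact le_top
  have hg : Gint r μ ≠ ⊤ := by
    intro hg
    rw [hg, top_add, top_le_iff, ENNReal.add_eq_top, ENNReal.add_eq_top] at h1
    rcases h1 with (h1 | h1) | h1
    · exact hp h1
    · exact ENNReal.ofReal_ne_top h1
    · exact ENNReal.ofReal_ne_top h1
  lift Ap μ to ℝ≥0 using hp with p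
  lift Gint r μ to ℝ≥0 using hg with g
  have c := Ccon_nonneg hr hr1
  have hl : 0 ≤ Real.log (1 + r) := Real.log_nonneg (by linarith)
  rw [coe_nn, EReal.coe_lt_coe_iff] at h
  have h3 : (g : ℝ) + m ≤ p + Ccon r + 2 * Real.log (1 + r) := by
    have := ENNReal.toReal_mono (by finiteness) h1
    rw [ENNReal.toReal_add (by finiteness) (by finiteness),
      ENNReal.toReal_add (by finiteness) (by finiteness),
      ENNReal.toReal_add (by finiteness) (by finiteness), ENNReal.toReal_ofReal c,
      ENNReal.toReal_ofReal (by linarith)] at this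
    simpa using this
  rw [coe_nn, coe_nn, ← EReal.coe_sub, EReal.coe_le_coe_iff]
  linarith

noncomputable def Jfun (μ : ProbabilityMeasure ℂ) : EReal :=
  if μ ∈ calP then doubleInt (μ : Measure ℂ) else ⊤

theorem Jfun_lsc : LowerSemicontinuous Jfun := by
  intro μ y hy
  by_cases hμ : μ ∈ calP
  · rw [Jfun, if_pos hμ] at hy
    obtain ⟨a, hya, haJ⟩ := EReal.lt_iff_exists_real_btwn.1 hy
    obtain ⟨b, hab, hbJ⟩ := EReal.lt_iff_exists_real_btwn.1 haJ
    rw [EReal.coe_lt_coe_iff] at hab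
    set r : ℝ := min 1 ((b - a) / 2) with hr
    have hr0 : 0 < r := lt_min one_pos (by linarith)
    have hr1 : r ≤ 1 := min_le_left _ _
    have hr2 : r ≤ (b - a) / 2 := min_le_right _ _
    have hG := doubleInt_lt hμ hr0 hr1 hbJ
    have hlsc : LowerSemicontinuous (fun ν => (Gint r ν : EReal)) :=
      continuous_coe_ennreal_ereal.comp_lowerSemicontinuous (Gint_lsc hr0 hr1)
        (fun x y h => EReal.coe_ennreal_le_coe_ennreal_iff.2 h)
    filter_upwards [hlsc μ _ hG] with ν hν
    by_cases hνP : ν ∈ calP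
    · rw [Jfun, if_pos hνP]
      refine hya.trans_le (le_trans ?_ (lt_doubleInt hνP hr0 hr1 hν))
      rw [EReal.coe_le_coe_iff]
      have := Real.log_le_sub_one_of_pos (show 0 < 1 + r by linarith)
      linarith
    · rw [Jfun, if_neg hνP]; exact hya.trans_le le_top
  · have hcl : IsClosed calP := isClosed_closure
    filter_upwards [hcl.isOpen_compl.mem_nhds hμ] with ν hν
    rw [Jfun, if_neg hμ] at hy
    rw [Jfun, if_neg hν]
    exact hy

theorem half_eq : (2 : EReal)⁻¹ = ((2⁻¹ : ℝ) : EReal) := by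
  rw [EReal.coe_inv]; rfl

theorem rateI_eq : rateI = fun μ => ((2⁻¹ : ℝ) : EReal) * Jfun μ := by
  funext μ
  unfold rateI Jfun
  rw [half_eq]
  split_ifs
  · rfl
  · rw [EReal.coe_mul_top_of_pos (by norm_num)]

theorem rateI_lsc : LowerSemicontinuous rateI := by
  rw [rateI_eq]
  have hc : Continuous (fun x : EReal => ((2⁻¹ : ℝ) : EReal) * x) := by
    rw [continuous_iff_continuousAt]
    intro x
    have hm : ContinuousAt (fun p : EReal × EReal => p.1 * p.2) (((2⁻¹ : ℝ) : EReal), x) := by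
      apply EReal.continuousAt_mul <;> simp
    exact hm.comp (f := fun x : EReal => (((2⁻¹ : ℝ) : EReal), x)) (by fun_prop)
  exact hc.comp_lowerSemicontinuous Jfun_lsc
    (fun x y h => mul_le_mul_of_nonneg_left h (by exact_mod_cast (by norm_num : (0 : ℝ) ≤ 2⁻¹)))

/-- The rate function `I` is well defined and lower semicontinuous: for every
`μ ∈ 𝒫` the negative part of `f(z,w) = log|1-z| + log|1-w| - log|z-w|` is
integrable with respect to `μ ⊗ μ` (so the integral of `f` is well defined in
`(-∞,∞]`), the integral is uniformly bounded below over `𝒫`, and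
`I : M₁(ℂ) → (-∞,∞]` is lower semicontinuous with respect to weak convergence. -/
theorem rateI_wellDefined_lsc :
    (∃ c : ℝ, ∀ μ ∈ calP,
      (∫⁻ q : ℂ × ℂ, ENNReal.ofReal (-(fker q.1 q.2))
          ∂((μ : Measure ℂ).prod (μ : Measure ℂ))) < ⊤ ∧
      (c : EReal) ≤ doubleInt (μ : Measure ℂ)) ∧
    LowerSemicontinuous rateI := by
  refine ⟨⟨-(Ccon 1 + 2 * Real.log (1 + 1)), fun μ hμ => ⟨Am_lt μ hμ, ?_⟩⟩, rateI_lsc⟩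
  have h := Am_le μ hμ one_pos le_rfl
  have hA := (Am_lt μ hμ).ne
  have c := Ccon_nonneg one_pos le_rfl
  have hl : 0 ≤ Real.log (1 + 1) := Real.log_nonneg (by norm_num)
  rw [doubleInt_eq, sub_eq_add_neg]
  refine le_trans ?_ (le_add_of_nonneg_left (EReal.coe_ennreal_nonneg (Ap μ)))
  rw [← ENNReal.ofReal_add c (by linarith)] at h
  lift Am μ to ℝ≥0 using hA with m
  have h2 := ENNReal.toReal_mono (by finiteness) h
  rw [ENNReal.toReal_ofReal (by linarith), ENNReal.coe_toReal] at h2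
  rw [coe_nn, ← EReal.coe_neg, EReal.coe_le_coe_iff]
  linarith
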